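/- Let φ : ℝ → ℝ be continuously differentiable and non-increasing. Then for every λ > 0 the Yosida approximation φ_λ is differentiable on ℝ, and for every u ∈ ℝ, lim_{λ → 0⁺} φ_λ'(u) = φ'(u). -/

import Mathlib

/-- The resolvent `J_λ = (I - λφ)⁻¹` of a (continuous, non-increasing) function
`φ : ℝ → ℝ`. -/
noncomputable def Jlam (φ : ℝ → ℝ) (lam : ℝ) : ℝ → ℝ :=
  Function.invFun (fun u : ℝ => u - lam * φ u)

/-- The Yosida approximation `φ_λ(u) = (J_λ(u) - u)/λ`. -/
noncomputable def yosida (φ : ℝ → ℝ) (lam : ℝ) (u : ℝ) : ℝ :=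
  (Jlam φ lam u - u) / lam

/-!
Since `φ` is non-increasing, `u ↦ u - λ φ(u)` expands distances. Hence `J_λ` is `1`-Lipschitz and
`|J_λ(u) - u| ≤ |λ φ(u)|`, so `J_λ(u) → u` as `λ → 0⁺`. The equation `J_λ - λ φ(J_λ) = id` says
that `φ_λ = φ ∘ J_λ`; with the inverse function theorem this gives
`φ_λ'(u) = φ'(J_λ(u)) / (1 - λ φ'(J_λ(u)))`, whose limit is read off from the continuity of `φ'`.
-/

section Resolvent

open Filter
open scoped Topology

variable {φ : ℝ → ℝ} {lam : ℝ}

theorem antilipschitzWith_id_sub_mul (hφ : Antitone φ) (hlam : 0 ≤ lam) :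
    AntilipschitzWith 1 (fun u => u - lam * φ u) := by
  refine AntilipschitzWith.of_le_mul_dist fun a b => ?_
  simp only [NNReal.coe_one, one_mul]
  wlog hab : b ≤ a generalizing a b
  · rw [dist_comm a, dist_comm (a - _)]
    exact this b a (le_of_not_ge hab)
  have hle : lam * φ a ≤ lam * φ b := mul_le_mul_of_nonneg_left (hφ hab) hlam
  calc dist a b = a - b := by rw [Real.dist_eq, abs_of_nonneg (sub_nonneg.2 hab)]
    _ ≤ (a - lam * φ a) - (b - lam * φ b) := by linarith
    _ ≤ dist (a - lam * φ a) (b - lam * φ b) := le_abs_self _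

theorem surjective_id_sub_mul (hc : Continuous φ) (hφ : Antitone φ) (hlam : 0 ≤ lam) :
    Function.Surjective (fun u => u - lam * φ u) := by
  intro y
  have hcont : Continuous fun u => u - lam * φ u := by fun_prop
  -- The values at `y` and at `y + λ φ(y)` lie on opposite sides of `y`.
  rcases le_total 0 (lam * φ y) with h | h
  · have hle : lam * φ (y + lam * φ y) ≤ lam * φ y :=
      mul_le_mul_of_nonneg_left (hφ (le_add_of_nonneg_right h)) hlam
    exact mem_range_of_exists_le_of_exists_ge hcont
      ⟨y, by linarith⟩ ⟨y + lam * φ y, by linarith⟩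
  · have hle : lam * φ y ≤ lam * φ (y + lam * φ y) :=
      mul_le_mul_of_nonneg_left (hφ (add_le_of_nonpos_right h)) hlam
    exact mem_range_of_exists_le_of_exists_ge hcont
      ⟨y + lam * φ y, by linarith⟩ ⟨y, by linarith⟩

theorem rightInverse_Jlam (hc : Continuous φ) (hφ : Antitone φ) (hlam : 0 ≤ lam) :
    Function.RightInverse (Jlam φ lam) (fun u => u - lam * φ u) :=
  Function.rightInverse_invFun (surjective_id_sub_mul hc hφ hlam)

theorem Jlam_sub_mul_Jlam (hc : Continuous φ) (hφ : Antitone φ) (hlam : 0 ≤ lam) (u : ℝ) :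
    Jlam φ lam u - lam * φ (Jlam φ lam u) = u :=
  rightInverse_Jlam hc hφ hlam u

theorem lipschitzWith_Jlam (hc : Continuous φ) (hφ : Antitone φ) (hlam : 0 ≤ lam) :
    LipschitzWith 1 (Jlam φ lam) :=
  (antilipschitzWith_id_sub_mul hφ hlam).to_rightInverse (rightInverse_Jlam hc hφ hlam)

theorem dist_Jlam_self_le (hc : Continuous φ) (hφ : Antitone φ) (hlam : 0 ≤ lam) (u : ℝ) :
    dist (Jlam φ lam u) u ≤ |lam * φ u| := by
  have hexp := (antilipschitzWith_id_sub_mul hφ hlam).le_mul_dist (Jlam φ lam u) u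
  rw [Jlam_sub_mul_Jlam hc hφ hlam] at hexp
  simpa only [NNReal.coe_one, one_mul, dist_self_sub_right, Real.norm_eq_abs] using hexp

theorem tendsto_Jlam_nhdsGE_zero (hc : Continuous φ) (hφ : Antitone φ) (u : ℝ) :
    Tendsto (fun lam => Jlam φ lam u) (𝓝[≥] 0) (𝓝 u) := by
  have hbound : Tendsto (fun lam => |lam * φ u|) (𝓝[≥] 0) (𝓝 0) := by
    have hcont : Continuous fun lam => |lam * φ u| := by fun_prop
    exact (hcont.tendsto' 0 0 (by simp)).mono_left nhdsWithin_le_nhds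
  refine tendsto_iff_dist_tendsto_zero.2 (squeeze_zero' (.of_forall fun _ => dist_nonneg) ?_ hbound)
  filter_upwards [self_mem_nhdsWithin] with lam hlam
  exact dist_Jlam_self_le hc hφ hlam u

theorem hasDerivAt_Jlam {φ' u : ℝ} (hc : Continuous φ) (hφ : Antitone φ) (hlam : 0 ≤ lam)
    (hd : HasDerivAt φ φ' (Jlam φ lam u)) :
    HasDerivAt (Jlam φ lam) (1 - lam * φ')⁻¹ u := by
  have hφ' : φ' ≤ 0 := hd.deriv ▸ hφ.deriv_nonpos
  have hne : 1 - lam * φ' ≠ 0 := by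
    linarith [mul_nonpos_of_nonneg_of_nonpos hlam hφ']
  have hmap : HasDerivAt (fun v => v - lam * φ v) (1 - lam * φ') (Jlam φ lam u) :=
    (hasDerivAt_id' _).sub (hd.const_mul lam)
  exact hmap.of_local_left_inverse (lipschitzWith_Jlam hc hφ hlam).continuous.continuousAt hne
    (.of_forall (rightInverse_Jlam hc hφ hlam))

theorem yosida_eq_comp_Jlam (hc : Continuous φ) (hφ : Antitone φ) (hlam : 0 < lam) :
    yosida φ lam = φ ∘ Jlam φ lam := by
  funext u
  rw [yosida, Function.comp_apply, div_eq_iff hlam.ne']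
  linarith [Jlam_sub_mul_Jlam hc hφ hlam.le u]

theorem hasDerivAt_yosida {φ' u : ℝ} (hc : Continuous φ) (hφ : Antitone φ) (hlam : 0 < lam)
    (hd : HasDerivAt φ φ' (Jlam φ lam u)) :
    HasDerivAt (yosida φ lam) (φ' / (1 - lam * φ')) u := by
  rw [yosida_eq_comp_Jlam hc hφ hlam, div_eq_mul_inv]
  exact hd.comp u (hasDerivAt_Jlam hc hφ hlam.le hd)

theorem tendsto_deriv_yosida {u : ℝ} (hc : Continuous φ) (hφ : Antitone φ)
    (hd : ∀ᶠ v in 𝓝 u, DifferentiableAt ℝ φ v) (hd' : ContinuousAt (deriv φ) u) :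
    Tendsto (fun lam => deriv (yosida φ lam) u) (𝓝[>] 0) (𝓝 (deriv φ u)) := by
  have hJ : Tendsto (fun lam => Jlam φ lam u) (𝓝[>] 0) (𝓝 u) :=
    (tendsto_Jlam_nhdsGE_zero hc hφ u).mono_left (nhdsWithin_mono 0 Set.Ioi_subset_Ici_self)
  have hlim : Tendsto
      (fun lam => deriv φ (Jlam φ lam u) / (1 - lam * deriv φ (Jlam φ lam u)))
      (𝓝[>] 0) (𝓝 (deriv φ u / (1 - 0 * deriv φ u))) := by
    have hderiv := hd'.tendsto.comp hJ
    have hid : Tendsto (fun lam : ℝ => lam) (𝓝[>] 0) (𝓝 0) := nhdsWithin_le_nhds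
    exact hderiv.div (tendsto_const_nhds.sub (hid.mul hderiv)) (by simp)
  rw [zero_mul, sub_zero, div_one] at hlim
  refine hlim.congr' ?_
  filter_upwards [self_mem_nhdsWithin, hJ.eventually hd] with lam hlam hdJ
  exact (hasDerivAt_yosida hc hφ hlam hdJ.hasDerivAt).deriv.symm

end Resolvent

theorem yosida_deriv_tendsto_general {φ : ℝ → ℝ} (hc : Continuous φ) (hφ : Antitone φ) :
    (∀ lam : ℝ, 0 < lam → ∀ u : ℝ, DifferentiableAt ℝ φ (Jlam φ lam u) →
      DifferentiableAt ℝ (yosida φ lam) u) ∧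
    (∀ u : ℝ, (∀ᶠ v in nhds u, DifferentiableAt ℝ φ v) → ContinuousAt (deriv φ) u →
      Filter.Tendsto (fun lam : ℝ => deriv (yosida φ lam) u)
        (nhdsWithin 0 (Set.Ioi 0)) (nhds (deriv φ u))) :=
  ⟨fun _ hlam _ hd => (hasDerivAt_yosida hc hφ hlam hd.hasDerivAt).differentiableAt,
    fun _ => tendsto_deriv_yosida hc hφ⟩

/-- For a continuously differentiable non-increasing `φ`, each Yosida
approximation `φ_λ` (`λ > 0`) is differentiable, and `φ_λ'(u) → φ'(u)` as
`λ → 0⁺` for every `u`. -/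
theorem yosida_deriv_tendsto (φ : ℝ → ℝ) (hφ : ContDiff ℝ 1 φ)
    (hmono : ∀ u₁ u₂ : ℝ, u₁ ≤ u₂ → φ u₂ ≤ φ u₁) :
    (∀ lam : ℝ, 0 < lam → Differentiable ℝ (yosida φ lam)) ∧
    (∀ u : ℝ, Filter.Tendsto (fun lam : ℝ => deriv (yosida φ lam) u)
      (nhdsWithin 0 (Set.Ioi 0)) (nhds (deriv φ u))) := by
  have hd : Differentiable ℝ φ := hφ.differentiable one_ne_zero
  obtain ⟨hdiff, hlim⟩ := yosida_deriv_tendsto_general hφ.continuous hmono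
  exact ⟨fun lam hlam u => hdiff lam hlam u (hd _),
    fun u => hlim u (.of_forall hd) (hφ.continuous_deriv le_rfl).continuousAt⟩
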